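/- Let Φ = p^{−1}·Φ_p(1,0,0) + p^{−2}·Φ_p(2,1,0) and Φ^* = p^{−1}·Φ_p(0,0,−1) + p^{−2}·Φ_p(0,−1,−2) (so Φ^*(g) = Φ(g⁻¹)). Then Φ * Φ^* can be written uniquely as a finite sum Σ_{a ≥ b ≥ c} β(a,b,c)·Φ_p(a,b,c) over triples of integers a ≥ b ≥ c, and the coefficients satisfy: β(a,b,c) ≥ 0 for all (a,b,c); if β(a,b,c) ≠ 0 then one of the following holds: (a + b + c = 2 and −1 ≤ c ≤ b ≤ a ≤ 2), or (a + b + c = 0 and −2 ≤ c ≤ b ≤ a ≤ 2), or (a + b + c = −2 and −2 ≤ c ≤ b ≤ a ≤ 1); and β(a,b,c) ≤ 121·p^{c−a} for all (a,b,c). -/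

import Mathlib

open MeasureTheory

noncomputable section

variable (p : ℕ) [Fact p.Prime]

/-- The diagonal element `diag(p^a, p^b, p^c)` of `GL₃(ℚ_p)`. -/
def padicDiag (a b c : ℤ) : GL (Fin 3) ℚ_[p] := by
  have hp : (p : ℚ_[p]) ≠ 0 := by
    exact_mod_cast (Nat.cast_ne_zero (R := ℚ_[p])).mpr (Fact.out : p.Prime).ne_zero
  refine ⟨Matrix.diagonal ![(p : ℚ_[p]) ^ a, (p : ℚ_[p]) ^ b, (p : ℚ_[p]) ^ c],
    Matrix.diagonal ![(p : ℚ_[p]) ^ (-a), (p : ℚ_[p]) ^ (-b), (p : ℚ_[p]) ^ (-c)], ?_, ?_⟩ <;>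
  · rw [Matrix.diagonal_mul_diagonal]
    ext i j
    fin_cases i <;> fin_cases j <;>
      simp [zpow_neg, mul_inv_cancel₀ (zpow_ne_zero _ hp), inv_mul_cancel₀ (zpow_ne_zero _ hp)]

/-- `K_p = GL₃(ℤ_p)`, viewed as the image of `GL₃(ℤ_p)` inside `GL₃(ℚ_p)`. -/
def padicK : Set (GL (Fin 3) ℚ_[p]) :=
  Set.range fun u : (Matrix (Fin 3) (Fin 3) ℤ_[p])ˣ =>
    Units.map (RingHom.toMonoidHom (RingHom.mapMatrix (PadicInt.Coe.ringHom (p := p)))) u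

/-- The double coset `K_p · diag(p^a, p^b, p^c) · K_p`. -/
def padicDoubleCoset (a b c : ℤ) : Set (GL (Fin 3) ℚ_[p]) :=
  {x | ∃ k₁ ∈ padicK p, ∃ k₂ ∈ padicK p, x = k₁ * padicDiag p a b c * k₂}

/-- `Φ_p(a,b,c)`: the characteristic function of `K_p(a,b,c)`. -/
def padicPhi (a b c : ℤ) : GL (Fin 3) ℚ_[p] → ℝ :=
  (padicDoubleCoset p a b c).indicator fun _ => (1 : ℝ)

instance : MeasurableSpace (GL (Fin 3) ℚ_[p]) := borel _

/-- Convolution of functions on `GL₃(ℚ_p)` with respect to a measure `μ`. -/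
def padicConv (μ : Measure (GL (Fin 3) ℚ_[p])) (f h : GL (Fin 3) ℚ_[p] → ℝ) :
    GL (Fin 3) ℚ_[p] → ℝ :=
  fun x => ∫ y, f y * h (y⁻¹ * x) ∂μ

/-- `Φ = p⁻¹·Φ_p(1,0,0) + p⁻²·Φ_p(2,1,0)`. -/
def padicBigPhi : GL (Fin 3) ℚ_[p] → ℝ :=
  fun x => (p : ℝ)⁻¹ * padicPhi p 1 0 0 x + ((p : ℝ) ^ 2)⁻¹ * padicPhi p 2 1 0 x

/-- `Φ^* = p⁻¹·Φ_p(0,0,−1) + p⁻²·Φ_p(0,−1,−2)`, the adjoint of `Φ`. -/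
def padicBigPhiStar : GL (Fin 3) ℚ_[p] → ℝ :=
  fun x => (p : ℝ)⁻¹ * padicPhi p 0 0 (-1) x + ((p : ℝ) ^ 2)⁻¹ * padicPhi p 0 (-1) (-2) x

/-- The property of being an expansion `Φ * Φ^* = Σ_{a ≥ b ≥ c} β(a,b,c) Φ_p(a,b,c)`
with finitely supported coefficients supported on triples `a ≥ b ≥ c`. -/
def IsHeckeExpansion (μ : Measure (GL (Fin 3) ℚ_[p])) (β : ℤ × ℤ × ℤ →₀ ℝ) : Prop :=
  (∀ t ∈ β.support, t.2.2 ≤ t.2.1 ∧ t.2.1 ≤ t.1) ∧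
  ∀ x, padicConv p μ (padicBigPhi p) (padicBigPhiStar p) x =
    β.sum fun t c => c * padicPhi p t.1 t.2.1 t.2.2 x

/-!
The coefficient `β(a,b,c)` is the value of `Φ * Φ^*` at `x = diag(p^a,p^b,p^c)`, and this is the sum
over `r, s ∈ {1, 2}` of `p^(-r-s)` times the measure of the set of `y ∈ K_p(r,r-1,0)` with
`x⁻¹y ∈ K_p(s,s-1,0)`. Elementary divisors bound the `x` for which such a `y` exists.

For the upper bound, cut the set of `y` along the Iwasawa cells `N p^e K_p`, where `N` is the upper
unitriangular group. At most 3 (for `r = 1`) or 7 (for `r = 2`) exponents `e` occur, and `x⁻¹` maps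
the cell of `e` to that of `f = e - (a,b,c)`. Counting Hermite normal forms, the cell of `f` meets
`K_p(s,s-1,0)` in at most `s p^(s+f₀-f₂)` left cosets of `K_p`; for `s = 2` the count uses that `p`
divides the adjugate of each element of `K_p(2,1,0)`. Since `e₀ - e₂ ≤ r`, each term is at most
`s p^(r+s+c-a)`, so the weight `p^(-r-s)` is cancelled and `β(a,b,c) ≤ (3 + 7)(1 + 2) p^(c-a)`.
-/

section MatrixReduction

open Matrix

variable {R ι : Type*} [CommRing R]

theorem exists_map_eq_smul {K : Type*} [CommRing K] [Algebra R K] {M : Submonoid R}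
    [IsLocalization M K] [Finite ι] (A : Matrix ι ι K) :
    ∃ b ∈ M, ∃ B : Matrix ι ι R, B.map (algebraMap R K) = b • A := by
  obtain ⟨⟨b, hb⟩, h⟩ := IsLocalization.exist_integer_multiples_of_finite M
    fun ij : ι × ι => A ij.1 ij.2
  choose B hB using h
  exact ⟨b, hb, fun i j => B (i, j), Matrix.ext fun i j => hB (i, j)⟩

variable [Fintype ι] [DecidableEq ι]

theorem exists_eq_mul_diagonal_mul [IsDomain R] [IsPrincipalIdealRing R] {A : Matrix ι ι R}
    (hA : A.det ≠ 0) : ∃ (U V : GL ι R) (d : ι → R), A = U.1 * diagonal d * V.1 := by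
  have hinj : Function.Injective A.mulVecLin := mulVec_injective_of_det_ne_zero hA
  obtain ⟨b, d, c, hbc⟩ := Submodule.exists_smith_normal_form_of_rank_eq (Pi.basisFun R ι)
    (LinearMap.finrank_range_of_inj hinj)
  let c' := c.map (LinearEquiv.ofInjective A.mulVecLin hinj).symm
  have hA_c' : ∀ i, A *ᵥ c' i = d i • b i := fun i => by
    rw [← hbc]
    exact congrArg Subtype.val
      ((LinearEquiv.ofInjective A.mulVecLin hinj).apply_symm_apply (c i))
  let e := Pi.basisFun R ι
  let U : GL ι R := ⟨e.toMatrix b, b.toMatrix e, e.toMatrix_mul_toMatrix_flip b,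
    b.toMatrix_mul_toMatrix_flip e⟩
  let V : GL ι R := ⟨c'.toMatrix e, e.toMatrix c', c'.toMatrix_mul_toMatrix_flip e,
    e.toMatrix_mul_toMatrix_flip c'⟩
  refine ⟨U, V, d, (Units.mul_inv_eq_iff_eq_mul V).1 ?_⟩
  ext i j
  have h := congrFun (hA_c' j) i
  rw [mul_diagonal]
  simpa [mulVec, dotProduct, mul_apply, U, V, e, Module.Basis.toMatrix_apply, mul_comm] using h

theorem exists_eq_map_mul_diagonal_mul_map [IsDomain R] [IsPrincipalIdealRing R] {K : Type*}
    [Field K] [Algebra R K] [IsFractionRing R K] (g : GL ι K) :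
    ∃ (U V : GL ι R) (x : ι → K), g.1 = (GeneralLinearGroup.map (algebraMap R K) U).1 *
      diagonal x * (GeneralLinearGroup.map (algebraMap R K) V).1 := by
  obtain ⟨b, hb, B, hB⟩ := exists_map_eq_smul (M := nonZeroDivisors R) g.1
  have hb' : algebraMap R K b ≠ 0 := (IsLocalization.map_units K ⟨b, hb⟩).ne_zero
  have hdet : algebraMap R K B.det ≠ 0 := by
    rw [RingHom.map_det, RingHom.mapMatrix_apply, hB, algebra_compatible_smul K b g.1, det_smul]
    exact mul_ne_zero (pow_ne_zero _ hb') (GeneralLinearGroup.det_ne_zero g)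
  obtain ⟨U, V, d, rfl⟩ := exists_eq_mul_diagonal_mul
    fun h : B.det = 0 => hdet (by rw [h, map_zero])
  refine ⟨U, V, (algebraMap R K b)⁻¹ • algebraMap R K ∘ d, ?_⟩
  rw [diagonal_smul, Matrix.mul_smul, Matrix.smul_mul, eq_inv_smul_iff₀ hb',
    ← algebra_compatible_smul K b g.1, ← hB, Matrix.map_mul, Matrix.map_mul,
    diagonal_map (map_zero _)]
  rfl

theorem exists_vecMul_apply_eq_zero_of_dvd {r : ι → R} {j : ι} (hr : ∀ i, r j ∣ r i) :
    ∃ V : GL ι R, ∀ i ≠ j, (r ᵥ* V.1) i = 0 := by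
  choose q hq using hr
  let c := Function.update q j 0
  have hc : vecMulVec (Pi.single j 1) c * vecMulVec (Pi.single j 1) c = 0 := by
    simp [vecMulVec_mul_vecMulVec, c]
  refine ⟨⟨1 - vecMulVec (Pi.single j 1) c, 1 + vecMulVec (Pi.single j 1) c, ?_, ?_⟩,
    fun i hi => ?_⟩
  · rw [← (Commute.one_left _).mul_self_sub_mul_self_eq', hc]; simp
  · rw [← (Commute.one_left _).mul_self_sub_mul_self_eq, hc]; simp
  · simp [vecMul_sub, vecMul_vecMulVec, c, hi, ← hq i]

theorem exists_GL_succ_extending {n : ℕ} (V : GL (Fin n) R) :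
    ∃ W : GL (Fin (n + 1)) R, (∀ i j, W.1 (Fin.castSucc i) (Fin.castSucc j) = V.1 i j) ∧
      ∀ j, W.1 (Fin.last n) (Fin.castSucc j) = 0 := by
  let e : Fin n ⊕ Fin 1 ≃ Fin (n + 1) := finSumFinEquiv
  refine ⟨Units.map (reindexRingEquiv R e).toMonoidHom
    ⟨fromBlocks V.1 0 0 1, fromBlocks V⁻¹.1 0 0 1, by simp [fromBlocks_multiply],
      by simp [fromBlocks_multiply]⟩, fun i j => ?_, fun j => ?_⟩ <;>
  simp [e, Fin.castSucc]

variable [PreValuationRing R]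

theorem exists_vecMul_apply_eq_zero (r : ι → R) (j : ι) :
    ∃ V : GL ι R, ∀ i ≠ j, (r ᵥ* V.1) i = 0 := by
  have : Std.Total fun x y : R => y ∣ x := ⟨fun _ _ => ValuationRing.dvd_total _ _⟩
  have : IsTrans R fun x y => y ∣ x := ⟨fun _ _ _ h h' => h'.trans h⟩
  have : Nonempty ι := ⟨j⟩
  obtain ⟨l, hl⟩ := Directed.finite_le (Std.Total.directed (r := fun x y : R => y ∣ x) r) id
  have hdvd : ∀ i, (r ᵥ* swap R j l) j ∣ (r ᵥ* swap R j l) i := fun i => by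
    simpa [vecMul_swap] using hl (Equiv.swap j l i)
  obtain ⟨V, hV⟩ := exists_vecMul_apply_eq_zero_of_dvd hdvd
  exact ⟨GeneralLinearGroup.swap R j l * V, by
    simpa [vecMul_vecMul, GeneralLinearGroup.swap] using hV⟩

theorem exists_isUpperTriangular_mul :
    ∀ {n : ℕ} (A : Matrix (Fin n) (Fin n) R), ∃ V : GL (Fin n) R, (A * V.1).IsUpperTriangular
  | 0, _ => ⟨1, fun i => i.elim0⟩
  | n + 1, A => by
    obtain ⟨V₁, hV₁⟩ := exists_vecMul_apply_eq_zero (A (Fin.last n)) (Fin.last n)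
    obtain ⟨V₂, hV₂⟩ := exists_isUpperTriangular_mul
      ((A * V₁.1).submatrix Fin.castSucc Fin.castSucc)
    obtain ⟨V₂', hcast, hlast⟩ := exists_GL_succ_extending V₂
    have hrow (l : Fin n) : (A * V₁.1) (Fin.last n) l.castSucc = 0 :=
      hV₁ _ (Fin.castSucc_ne_last l)
    refine ⟨V₁ * V₂', fun i j hij => ?_⟩
    obtain ⟨j, rfl⟩ := Fin.exists_castSucc_eq.2 (Fin.ne_last_of_lt hij)
    rw [Units.val_mul, ← Matrix.mul_assoc, mul_apply, Fin.sum_univ_castSucc, hlast, mul_zero,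
      add_zero]
    simp only [hcast]
    cases i using Fin.lastCases with
    | last => simp [hrow]
    | cast i => exact hV₂ (Fin.castSucc_lt_castSucc_iff.1 hij)

theorem exists_mul_map_isUpperTriangular {K : Type*} [Field K] [Algebra R K]
    [IsFractionRing R K] {n : ℕ} (A : Matrix (Fin n) (Fin n) K) :
    ∃ V : GL (Fin n) R, (A * (GeneralLinearGroup.map (algebraMap R K) V).1).IsUpperTriangular := by
  obtain ⟨b, hb, B, hB⟩ := exists_map_eq_smul (M := nonZeroDivisors R) A
  have hb' : algebraMap R K b ≠ 0 := (IsLocalization.map_units K ⟨b, hb⟩).ne_zero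
  obtain ⟨V, hV⟩ := exists_isUpperTriangular_mul B
  refine ⟨V, fun i j hij => ?_⟩
  have h : (B * V.1).map (algebraMap R K) i j =
      algebraMap R K b * (A * (GeneralLinearGroup.map (algebraMap R K) V).1) i j := by
    rw [Matrix.map_mul, hB, Matrix.smul_mul, Matrix.smul_apply, Algebra.smul_def]
    rfl
  rw [map_apply, hV hij, map_zero] at h
  exact (mul_eq_zero.1 h.symm).resolve_left hb'

end MatrixReduction

section IntegralSubgroup

open Matrix

variable {ι : Type*} [Fintype ι] [DecidableEq ι]

variable (ι) in
/-- The subgroup `GL_ι(ℤ_p)` of `GL_ι(ℚ_p)`; membership in `integralGL p (Fin 3)` unfolds to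
membership in `padicK p`. -/
def integralGL : Subgroup (GL ι ℚ_[p]) :=
  (GeneralLinearGroup.map (algebraMap ℤ_[p] ℚ_[p])).range

variable {p}

theorem isCompact_integralGL : IsCompact (integralGL p ι : Set (GL ι ℚ_[p])) :=
  have : CompactSpace (Matrix ι ι ℤ_[p]) := inferInstanceAs (CompactSpace (ι → ι → ℤ_[p]))
  have : T1Space (Matrix ι ι ℤ_[p]) := inferInstanceAs (T1Space (ι → ι → ℤ_[p]))
  have : CompactSpace (GL ι ℤ_[p]) := inferInstanceAs (CompactSpace (Matrix ι ι ℤ_[p])ˣ)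
  isCompact_range PadicInt.isOpenEmbedding_coe.continuous.generalLinearGroup_map

theorem exists_mem_integralGL_val_eq_diagonal (u : ι → ℤ_[p]ˣ) :
    ∃ k ∈ integralGL p ι, k.1 = diagonal fun i => ((u i : ℤ_[p]) : ℚ_[p]) := by
  refine ⟨_, ⟨Units.map (diagonalRingHom ι ℤ_[p]).toMonoidHom (MulEquiv.piUnits.symm u), rfl⟩, ?_⟩
  exact diagonal_map (map_zero _)

theorem exists_mem_integralGL_mul_diagonal (σ : Equiv.Perm ι) :
    ∃ k ∈ integralGL p ι, ∀ d : ι → ℚ_[p], k.1 * diagonal d = diagonal (d ∘ σ) * k.1 := by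
  refine ⟨_, ⟨Units.map permMatrixHom (toUnits σ⁻¹), rfl⟩, fun d => ?_⟩
  ext i j
  have hk : (GeneralLinearGroup.map (algebraMap ℤ_[p] ℚ_[p])
      (Units.map permMatrixHom (toUnits σ⁻¹))).1 i j = if σ i = j then 1 else 0 := by
    change ((permMatrixHom σ⁻¹ i j : ℤ_[p]) : ℚ_[p]) = _
    rw [permMatrixHom_apply, inv_inv, Equiv.Perm.permMatrix, PEquiv.toMatrix_apply]
    split_ifs <;> simp_all [eq_comm]
  rw [mul_diagonal, diagonal_mul, hk]
  split_ifs with h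
  · rw [← h, one_mul, mul_one, Function.comp_apply]
  · rw [zero_mul, mul_zero]

theorem exists_padicInt_unit_mul_zpow {x : ℚ_[p]} (hx : x ≠ 0) :
    ∃ (u : ℤ_[p]ˣ) (n : ℤ), x = ((u : ℤ_[p]) : ℚ_[p]) * (p : ℚ_[p]) ^ n := by
  have hp : (p : ℚ_[p]) ≠ 0 := NeZero.ne _
  refine ⟨PadicInt.mkUnits (u := x * (p : ℚ_[p]) ^ (-x.valuation)) ?_, x.valuation, ?_⟩
  · rw [norm_mul, Padic.norm_eq_zpow_neg_valuation hx, Padic.norm_p_zpow, neg_neg, ← zpow_add₀]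
    · simp
    · exact NeZero.ne _
  · rw [PadicInt.mkUnits_eq, mul_assoc, ← zpow_add₀ hp]
    simp

theorem exists_eq_mul_diagonal_zpow_mul (g : GL ι ℚ_[p]) :
    ∃ k ∈ integralGL p ι, ∃ l ∈ integralGL p ι, ∃ m : ι → ℤ,
      g.1 = k.1 * diagonal (fun i => (p : ℚ_[p]) ^ m i) * l.1 := by
  obtain ⟨U, V, x, hg⟩ := exists_eq_map_mul_diagonal_mul_map (R := ℤ_[p]) g
  have hx : ∀ i, x i ≠ 0 := by
    have h := GeneralLinearGroup.det_ne_zero g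
    rw [hg, det_mul, det_mul, det_diagonal] at h
    exact fun i => Finset.prod_ne_zero_iff.1 (right_ne_zero_of_mul (left_ne_zero_of_mul h)) i
      (Finset.mem_univ i)
  choose u m hum using fun i => exists_padicInt_unit_mul_zpow (hx i)
  obtain ⟨k, hk, hku⟩ := exists_mem_integralGL_val_eq_diagonal u
  refine ⟨_, mul_mem ⟨U, rfl⟩ hk, _, ⟨V, rfl⟩, m, ?_⟩
  rw [hg, Units.val_mul, Matrix.mul_assoc _ k.1, hku, diagonal_mul_diagonal]
  simp only [← hum]

end IntegralSubgroup

section CartanBox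

open Matrix

variable {p} {ι : Type*} [Fintype ι]

theorem norm_matrix_mul_apply_le {𝕜 : Type*} [SeminormedRing 𝕜] [IsUltrametricDist 𝕜]
    {A B : Matrix ι ι 𝕜} {r s : ℝ} (hA : ∀ i j, ‖A i j‖ ≤ r) (hB : ∀ i j, ‖B i j‖ ≤ s) (i j : ι) :
    ‖(A * B) i j‖ ≤ r * s := by
  have hr : 0 ≤ r := (norm_nonneg _).trans (hA i j)
  have hs : 0 ≤ s := (norm_nonneg _).trans (hB i j)
  exact IsUltrametricDist.norm_sum_le_of_forall_le_of_nonneg (mul_nonneg hr hs) fun l _ =>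
    (norm_mul_le _ _).trans (mul_le_mul (hA i l) (hB l j) (norm_nonneg _) hr)

theorem prod_zpow_eq_zpow_sum {G : Type*} [CommGroupWithZero G] {x : G} (hx : x ≠ 0)
    (f : ι → ℤ) : ∏ i, x ^ f i = x ^ ∑ i, f i := by
  rw [← Units.val_mk0 hx]
  norm_cast
  exact (map_sum (zpowersHom _ (Units.mk0 x hx)).toAdditive f Finset.univ).symm

theorem isUpperTriangular_mul_apply_self {R : Type*} [NonUnitalNonAssocSemiring R]
    [LinearOrder ι] {A B : Matrix ι ι R} (hA : A.IsUpperTriangular) (hB : B.IsUpperTriangular)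
    (i : ι) : (A * B) i i = A i i * B i i := by
  rw [mul_apply]
  refine Finset.sum_eq_single_of_mem i (Finset.mem_univ i) fun j _ hji => ?_
  rcases hji.lt_or_gt with h | h
  · rw [hA h, zero_mul]
  · rw [hB h, mul_zero]

variable [DecidableEq ι]

/-- The elements `g` of `GL_ι(ℚ_p)` such that `p^(-lo) g` and `p^hi g⁻¹` are integral and `det g`
has valuation `d`. In terms of the elementary divisors `p^m` of `g` this means that
`lo ≤ m i ≤ hi` for all `i` and `∑ i, m i = d`. -/
def cartanBox (lo hi d : ℤ) : Set (GL ι ℚ_[p]) :=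
  {g | (∀ i j, ‖g.1 i j‖ ≤ (p : ℝ) ^ (-lo)) ∧ (∀ i j, ‖g⁻¹.1 i j‖ ≤ (p : ℝ) ^ hi) ∧
    ‖g.1.det‖ = (p : ℝ) ^ (-d)}

variable {lo hi d lo' hi' d' : ℤ} {g h : GL ι ℚ_[p]}

theorem mul_mem_cartanBox (hg : g ∈ cartanBox lo hi d) (hh : h ∈ cartanBox lo' hi' d') :
    g * h ∈ cartanBox (lo + lo') (hi + hi') (d + d') := by
  have hp : (p : ℝ) ≠ 0 := NeZero.ne _
  refine ⟨?_, ?_, ?_⟩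
  · rw [neg_add, zpow_add₀ hp]
    exact norm_matrix_mul_apply_le hg.1 hh.1
  · rw [add_comm, zpow_add₀ hp, _root_.mul_inv_rev]
    exact norm_matrix_mul_apply_le hh.2.1 hg.2.1
  · rw [Units.val_mul, det_mul, norm_mul, hg.2.2, hh.2.2, neg_add, zpow_add₀ hp]

theorem inv_mem_cartanBox (hg : g ∈ cartanBox lo hi d) : g⁻¹ ∈ cartanBox (-hi) (-lo) (-d) := by
  refine ⟨by simpa using hg.2.1, by simpa using hg.1, ?_⟩
  rw [coe_units_inv, det_nonsing_inv, Ring.inverse_eq_inv', norm_inv, hg.2.2, ← _root_.zpow_neg]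

theorem mem_cartanBox_of_mem_integralGL (hg : g ∈ integralGL p ι) : g ∈ cartanBox 0 0 0 := by
  obtain ⟨u, rfl⟩ := hg
  have hentry (v : GL ι ℤ_[p]) (i j : ι) :
      ‖(GeneralLinearGroup.map (algebraMap ℤ_[p] ℚ_[p]) v).1 i j‖ ≤ 1 :=
    (v.1 i j).norm_le_one
  refine ⟨fun i j => by simpa using hentry u i j, fun i j => ?_, ?_⟩
  · rw [← map_inv]
    simpa using hentry u⁻¹ i j
  · change ‖((algebraMap ℤ_[p] ℚ_[p]).mapMatrix u.1).det‖ = _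
    rw [← RingHom.map_det, neg_zero, _root_.zpow_zero]
    exact PadicInt.norm_units (GeneralLinearGroup.det u)

theorem mul_mem_cartanBox_iff_of_mem_integralGL (hh : h ∈ integralGL p ι) :
    g * h ∈ cartanBox lo hi d ↔ g ∈ cartanBox lo hi d := by
  have hmul {x y : GL ι ℚ_[p]} (hx : x ∈ cartanBox lo hi d) (hy : y ∈ integralGL p ι) :
      x * y ∈ cartanBox lo hi d := by
    simpa using mul_mem_cartanBox hx (mem_cartanBox_of_mem_integralGL hy)
  exact ⟨fun hgh => by simpa using hmul hgh (inv_mem hh), fun hg => hmul hg hh⟩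

section UpperTriangular

variable [LinearOrder ι] {f : ι → ℤ}

theorem le_and_le_of_mem_cartanBox (hg : g ∈ cartanBox lo hi d)
    (htri : g.1.IsUpperTriangular) (hdiag : g.1.diag = fun i => (p : ℚ_[p]) ^ f i) (i : ι) :
    lo ≤ f i ∧ f i ≤ hi := by
  have hp : 1 < (p : ℝ) := by exact_mod_cast (Fact.out : p.Prime).one_lt
  have hgi : g.1 i i = (p : ℚ_[p]) ^ f i := congrFun hdiag i
  have htri_inv : g⁻¹.1.IsUpperTriangular := by
    have := g.invertible
    rw [coe_units_inv]
    exact blockTriangular_inv_of_blockTriangular htri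
  have hinv : g⁻¹.1 i i = ((p : ℚ_[p]) ^ f i)⁻¹ := by
    refine eq_inv_of_mul_eq_one_right ?_
    rw [← hgi, ← isUpperTriangular_mul_apply_self htri htri_inv, Units.mul_inv, one_apply_eq]
  have hlo := hg.1 i i
  have hhi := hg.2.1 i i
  rw [hgi, Padic.norm_p_zpow, zpow_le_zpow_iff_right₀ hp] at hlo
  rw [hinv, norm_inv, Padic.norm_p_zpow, ← _root_.zpow_neg, neg_neg,
    zpow_le_zpow_iff_right₀ hp] at hhi
  exact ⟨neg_le_neg_iff.1 hlo, hhi⟩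

theorem sum_eq_of_mem_cartanBox (hg : g ∈ cartanBox lo hi d)
    (htri : g.1.IsUpperTriangular) (hdiag : g.1.diag = fun i => (p : ℚ_[p]) ^ f i) :
    ∑ i, f i = d := by
  have hp : 1 < (p : ℝ) := by exact_mod_cast (Fact.out : p.Prime).one_lt
  have hdet : g.1.det = (p : ℚ_[p]) ^ ∑ i, f i := by
    rw [det_of_isUpperTriangular htri, ← prod_zpow_eq_zpow_sum (NeZero.ne _)]
    exact Finset.prod_congr rfl fun i _ => congrFun hdiag i
  have hd := hg.2.2
  rw [hdet, Padic.norm_p_zpow] at hd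
  exact neg_inj.1 (zpow_right_injective₀ (by positivity) hp.ne' hd)

end UpperTriangular

theorem inv_val_eq_diagonal_zpow_neg {f : ι → ℤ}
    (hg : g.1 = diagonal fun i => (p : ℚ_[p]) ^ f i) :
    g⁻¹.1 = diagonal fun i => (p : ℚ_[p]) ^ (-f i) := by
  have hf i : (p : ℚ_[p]) ^ f i ≠ 0 := zpow_ne_zero _ (NeZero.ne _)
  refine Units.inv_eq_of_mul_eq_one_right ?_
  simp [hg, diagonal_mul_diagonal, _root_.zpow_neg, hf]

theorem diagonal_zpow_mem_cartanBox {f : ι → ℤ} (hg : g.1 = diagonal fun i => (p : ℚ_[p]) ^ f i)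
    (hlo : ∀ i, lo ≤ f i) (hhi : ∀ i, f i ≤ hi) : g ∈ cartanBox lo hi (∑ i, f i) := by
  have hp : 1 < (p : ℝ) := by exact_mod_cast (Fact.out : p.Prime).one_lt
  have hentry {e : ι → ℤ} {m : ℤ} (he : ∀ i, -e i ≤ m) (i j : ι) :
      ‖diagonal (fun i => (p : ℚ_[p]) ^ e i) i j‖ ≤ (p : ℝ) ^ m := by
    rw [diagonal_apply]
    split_ifs
    · rw [Padic.norm_p_zpow]
      exact zpow_le_zpow_right₀ hp.le (he i)
    · rw [norm_zero]
      positivity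
  refine ⟨?_, ?_, ?_⟩
  · rw [hg]
    exact hentry fun i => neg_le_neg (hlo i)
  · rw [inv_val_eq_diagonal_zpow_neg hg]
    exact hentry fun i => (neg_neg (f i)).trans_le (hhi i)
  · rw [hg, det_diagonal, prod_zpow_eq_zpow_sum (NeZero.ne _), Padic.norm_p_zpow]

end CartanBox

section DoubleCoset

open Matrix

variable {p} {a b c a' b' c' : ℤ} {g : GL (Fin 3) ℚ_[p]}

theorem padicDiag_val (a b c : ℤ) :
    (padicDiag p a b c).1 = diagonal fun i => (p : ℚ_[p]) ^ ![a, b, c] i := by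
  refine congrArg diagonal (funext fun i => ?_)
  fin_cases i <;> rfl

theorem padicDoubleCoset_eq_doubleCoset (a b c : ℤ) : padicDoubleCoset p a b c =
    DoubleCoset.doubleCoset (padicDiag p a b c) (integralGL p (Fin 3)) (integralGL p (Fin 3)) :=
  Set.ext fun _ => DoubleCoset.mem_doubleCoset.symm

theorem padicDiag_mem_padicDoubleCoset (a b c : ℤ) :
    padicDiag p a b c ∈ padicDoubleCoset p a b c := by
  rw [padicDoubleCoset_eq_doubleCoset]
  exact DoubleCoset.mem_doubleCoset_self _ _ _

theorem padicDiag_mem_cartanBox (hcb : c ≤ b) (hba : b ≤ a) :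
    padicDiag p a b c ∈ cartanBox c a (a + b + c) := by
  have h := diagonal_zpow_mem_cartanBox (lo := c) (hi := a) (padicDiag_val (p := p) a b c)
    (fun i => by fin_cases i <;> simp <;> omega) (fun i => by fin_cases i <;> simp <;> omega)
  simpa [Fin.sum_univ_three] using h

theorem padicDoubleCoset_subset_cartanBox (hcb : c ≤ b) (hba : b ≤ a) :
    padicDoubleCoset p a b c ⊆ cartanBox c a (a + b + c) := by
  rintro _ ⟨k, hk, l, hl, rfl⟩
  refine (mul_mem_cartanBox_iff_of_mem_integralGL hl).2 ?_
  simpa using mul_mem_cartanBox (mem_cartanBox_of_mem_integralGL hk)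
    (padicDiag_mem_cartanBox hcb hba)

theorem padicDiag_le_and_le_of_mem_cartanBox {lo hi d : ℤ}
    (h : padicDiag p a b c ∈ cartanBox lo hi d) : lo ≤ c ∧ a ≤ hi ∧ a + b + c = d := by
  have htri : (padicDiag p a b c).1.IsUpperTriangular :=
    padicDiag_val (p := p) a b c ▸ blockTriangular_diagonal _
  have hdiag : (padicDiag p a b c).1.diag = fun i => (p : ℚ_[p]) ^ ![a, b, c] i := by
    rw [padicDiag_val, diag_diagonal]
  have hsum := sum_eq_of_mem_cartanBox h htri hdiag
  rw [Fin.sum_univ_three] at hsum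
  exact ⟨(le_and_le_of_mem_cartanBox h htri hdiag 2).1,
    (le_and_le_of_mem_cartanBox h htri hdiag 0).2, hsum⟩

theorem eq_of_mem_padicDoubleCoset (hcb : c ≤ b) (hba : b ≤ a) (hcb' : c' ≤ b') (hba' : b' ≤ a')
    (h : g ∈ padicDoubleCoset p a b c) (h' : g ∈ padicDoubleCoset p a' b' c') :
    (a, b, c) = (a', b', c') := by
  have heq : padicDoubleCoset p a b c = padicDoubleCoset p a' b' c' := by
    rw [padicDoubleCoset_eq_doubleCoset] at h h' ⊢
    rw [padicDoubleCoset_eq_doubleCoset, ← DoubleCoset.doubleCoset_eq_of_mem h,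
      ← DoubleCoset.doubleCoset_eq_of_mem h']
  have hbox : padicDiag p a b c ∈ cartanBox c' a' (a' + b' + c') :=
    padicDoubleCoset_subset_cartanBox hcb' hba' (heq ▸ padicDiag_mem_padicDoubleCoset a b c)
  have hbox' : padicDiag p a' b' c' ∈ cartanBox c a (a + b + c) :=
    padicDoubleCoset_subset_cartanBox hcb hba (heq ▸ padicDiag_mem_padicDoubleCoset a' b' c')
  have := padicDiag_le_and_le_of_mem_cartanBox hbox
  have := padicDiag_le_and_le_of_mem_cartanBox hbox'
  simp only [Prod.mk.injEq]
  omega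

theorem exists_mem_padicDoubleCoset (g : GL (Fin 3) ℚ_[p]) :
    ∃ a b c : ℤ, c ≤ b ∧ b ≤ a ∧ g ∈ padicDoubleCoset p a b c := by
  obtain ⟨k, hk, l, hl, m, hg⟩ := exists_eq_mul_diagonal_zpow_mul g
  let σ := Tuple.sort fun i => -m i
  have hmono : Antitone (m ∘ σ) := fun i j hij =>
    neg_le_neg_iff.1 (Tuple.monotone_sort (fun i => -m i) hij)
  obtain ⟨w, hw, hconj⟩ := exists_mem_integralGL_mul_diagonal (p := p) σ
  refine ⟨m (σ 0), m (σ 1), m (σ 2), hmono (by decide), hmono (by decide), k * w⁻¹,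
    mul_mem hk (inv_mem hw), w * l, mul_mem hw hl, Units.ext ?_⟩
  have hdiag : (padicDiag p (m (σ 0)) (m (σ 1)) (m (σ 2))).1 =
      diagonal ((fun i => (p : ℚ_[p]) ^ m i) ∘ σ) := by
    rw [padicDiag_val]
    refine congrArg diagonal (funext fun i => ?_)
    fin_cases i <;> rfl
  calc g.1 = k.1 * (w⁻¹.1 * (w.1 * diagonal fun i => (p : ℚ_[p]) ^ m i)) * l.1 := by
        rw [Units.inv_mul_cancel_left, hg]
    _ = _ := by
        rw [hconj, ← hdiag]
        simp only [Units.val_mul, Matrix.mul_assoc]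

end DoubleCoset

section HermiteMatrix

open Matrix

/-- The upper triangular matrix with diagonal entries `q^(n i)` and entries `x, y, z` above the
diagonal. Those with natural numbers `x, y < q^(n 0)` and `z < q^(n 1)` are the Hermite normal forms
of `3 × 3` matrices under right multiplication by invertible matrices. -/
def hermiteMatrix {R : Type*} [Semiring R] (q : ℕ) (n : Fin 3 → ℕ) (x y z : R) :
    Matrix (Fin 3) (Fin 3) R :=
  !![(q : R) ^ n 0, x, y; 0, (q : R) ^ n 1, z; 0, 0, (q : R) ^ n 2]

theorem map_hermiteMatrix {R S : Type*} [Semiring R] [Semiring S] (φ : R →+* S) (q : ℕ)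
    (n : Fin 3 → ℕ) (x y z : R) :
    (hermiteMatrix q n x y z).map φ = hermiteMatrix q n (φ x) (φ y) (φ z) := by
  ext i j
  fin_cases i <;> fin_cases j <;> simp [hermiteMatrix]

variable {p}

theorem exists_lt_pow_eq_add_mul (x : ℤ_[p]) (n : ℕ) :
    ∃ a < p ^ n, ∃ y : ℤ_[p], x = a + (p : ℤ_[p]) ^ n * y := by
  obtain ⟨y, hy⟩ := Ideal.mem_span_singleton.1 (PadicInt.appr_spec n x)
  exact ⟨x.appr n, PadicInt.appr_lt x n, y, by rw [← hy]; ring⟩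

theorem exists_hermiteMatrix_mul_eq (n : Fin 3 → ℕ) (x y z : ℤ_[p]) :
    ∃ a < p ^ n 0, ∃ b < p ^ n 0, ∃ c < p ^ n 1, ∃ k : GL (Fin 3) ℤ_[p],
      hermiteMatrix p n x y z * k.1 = hermiteMatrix p n (a : ℤ_[p]) b c := by
  obtain ⟨a, ha, s, hs⟩ := exists_lt_pow_eq_add_mul x (n 0)
  obtain ⟨c, hc, t, ht⟩ := exists_lt_pow_eq_add_mul z (n 1)
  obtain ⟨b, hb, r, hr⟩ := exists_lt_pow_eq_add_mul (y - x * t) (n 0)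
  have hdet : (!![1, -s, -r; 0, 1, -t; 0, 0, 1] : Matrix (Fin 3) (Fin 3) ℤ_[p]).det = 1 := by
    simp [det_fin_three]
  refine ⟨a, ha, b, hb, c, hc, GeneralLinearGroup.mk'' _ (hdet ▸ isUnit_one), ?_⟩
  have h₀₁ : -((p : ℤ_[p]) ^ n 0 * s) + x = a := by linear_combination hs
  have h₀₂ : -((p : ℤ_[p]) ^ n 0 * r) + -(x * t) + y = b := by linear_combination hr
  have h₁₂ : -((p : ℤ_[p]) ^ n 1 * t) + z = c := by linear_combination ht
  ext i j
  fin_cases i <;> fin_cases j <;>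
    simp [hermiteMatrix, Matrix.mul_apply, Fin.sum_univ_three, h₀₁, h₀₂, h₁₂]

theorem exists_eq_map_hermiteMatrix {A : Matrix (Fin 3) (Fin 3) ℚ_[p]} {n : Fin 3 → ℕ}
    (hA : ∀ i j, ‖A i j‖ ≤ 1) (htri : A.IsUpperTriangular)
    (hdiag : A.diag = fun i => (p : ℚ_[p]) ^ n i) :
    ∃ x y z : ℤ_[p], A = (hermiteMatrix p n x y z).map (algebraMap ℤ_[p] ℚ_[p]) := by
  have hdiag' i : A i i = (p : ℚ_[p]) ^ n i := congrFun hdiag i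
  have hlift i j : ∃ x : ℤ_[p], algebraMap ℤ_[p] ℚ_[p] x = A i j := ⟨⟨_, hA i j⟩, rfl⟩
  choose B hB using hlift
  refine ⟨B 0 1, B 0 2, B 1 2, ?_⟩
  have h₁₀ : A 1 0 = 0 := htri (by decide)
  have h₂₀ : A 2 0 = 0 := htri (by decide)
  have h₂₁ : A 2 1 = 0 := htri (by decide)
  rw [map_hermiteMatrix]
  ext i j
  fin_cases i <;> fin_cases j <;> simp [hermiteMatrix, hdiag', hB, h₁₀, h₂₀, h₂₁]

end HermiteMatrix

section Counting

open Finset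

theorem card_filter_dvd_range_pow {q n : ℕ} (hq : q ≠ 0) (hn : n ≠ 0) :
    #{a ∈ range (q ^ n) | q ∣ a} = q ^ (n - 1) := by
  obtain ⟨n, rfl⟩ := Nat.exists_eq_succ_of_ne_zero hn
  have : {a ∈ range (q ^ (n + 1)) | q ∣ a} = (range (q ^ n)).image (q * ·) := by
    ext a
    simp only [mem_filter, mem_range, mem_image, pow_succ']
    constructor
    · rintro ⟨ha, b, rfl⟩
      exact ⟨b, Nat.lt_of_mul_lt_mul_left ha, rfl⟩
    · rintro ⟨b, hb, rfl⟩
      exact ⟨Nat.mul_lt_mul_of_pos_left hb (Nat.pos_of_ne_zero hq), dvd_mul_right q b⟩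
  rw [this, card_image_of_injective _ (mul_right_injective₀ hq), card_range, Nat.succ_sub_one]

theorem card_mul_pow_le_of_subset_product {α β γ : Type*} {S : Finset (α × β × γ)} {A : Finset α}
    {B : Finset β} {C : Finset γ} (hsub : S ⊆ A ×ˢ B ×ˢ C) {q k l m r s : ℕ} (hA : #A = q ^ k)
    (hB : #B = q ^ l) (hC : #C = q ^ m) (hsum : k + (l + m) + r = s) : #S * q ^ r ≤ q ^ s := by
  refine (Nat.mul_le_mul_right _ (card_le_card hsub)).trans_eq ?_
  rw [card_product, card_product, hA, hB, hC, ← pow_add, ← pow_add, ← pow_add, hsum]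

/-- The off-diagonal entries of the Hermite normal forms with diagonal entries `q^(n i)`. -/
def hermiteTriples (q : ℕ) (n : Fin 3 → ℕ) : Finset (ℕ × ℕ × ℕ) :=
  range (q ^ n 0) ×ˢ range (q ^ n 0) ×ˢ range (q ^ n 1)

variable {n : Fin 3 → ℕ}

theorem card_hermiteTriples_mul_le (q : ℕ) (hn : ∑ i, n i = 1) :
    #(hermiteTriples q n) * q ^ n 2 ≤ q ^ (1 + n 0) := by
  rw [Fin.sum_univ_three] at hn
  exact card_mul_pow_le_of_subset_product subset_rfl (card_range _) (card_range _) (card_range _)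
    (by omega)

/-- The elements `(a, b, c)` of `hermiteTriples q n` such that `q` divides the off-diagonal entries
of the adjugate of the corresponding Hermite normal form. -/
def adjugateDvdTriples (q : ℕ) (n : Fin 3 → ℕ) : Finset (ℕ × ℕ × ℕ) :=
  {t ∈ hermiteTriples q n | q ∣ t.1 * q ^ n 2 ∧ q ∣ t.2.2 * q ^ n 0 ∧
    (q : ℤ) ∣ t.1 * t.2.2 - t.2.1 * q ^ n 1}

theorem mem_adjugateDvdTriples {q a b c : ℕ} : (a, b, c) ∈ adjugateDvdTriples q n ↔
    (a < q ^ n 0 ∧ b < q ^ n 0 ∧ c < q ^ n 1) ∧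
      q ∣ a * q ^ n 2 ∧ q ∣ c * q ^ n 0 ∧ (q : ℤ) ∣ a * c - b * q ^ n 1 := by
  simp only [adjugateDvdTriples, hermiteTriples, mem_filter, mem_product, mem_range]

theorem mem_adjugateDvdTriples_of_dvd_adjugate {q a b c : ℕ} (hmem : (a, b, c) ∈ hermiteTriples q n)
    (hdvd : ∀ i j, (q : ℤ) ∣ (hermiteMatrix q n (a : ℤ) b c).adjugate i j) :
    (a, b, c) ∈ adjugateDvdTriples q n := by
  have h₀₁ := hdvd 0 1
  have h₀₂ := hdvd 0 2
  have h₁₂ := hdvd 1 2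
  simp only [Matrix.adjugate_fin_three, hermiteMatrix, Matrix.of_apply, Matrix.cons_val, mul_zero,
    add_zero, dvd_neg] at h₀₁ h₀₂ h₁₂
  rw [mul_comm] at h₁₂
  exact mem_filter.2 ⟨hmem, by exact_mod_cast h₀₁, by exact_mod_cast h₁₂, h₀₂⟩

theorem card_adjugateDvdTriples_le_of_eq_zero {q : ℕ} (hq : q ≠ 0) (hn : ∑ i, n i = 3)
    (hn2 : ∀ i, n i ≤ 2) {i : Fin 3} (hi : n i = 0) :
    #(adjugateDvdTriples q n) * q ^ n 2 ≤ q ^ (2 + n 0) := by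
  rw [Fin.sum_univ_three] at hn
  have h0 := hn2 0
  have h1 := hn2 1
  have h2 := hn2 2
  fin_cases i <;> simp only [Fin.zero_eta, Fin.mk_one, Fin.reduceFinMk] at hi
  · have hsub : adjugateDvdTriples q n ⊆
        range (q ^ n 0) ×ˢ range (q ^ n 0) ×ˢ {x ∈ range (q ^ n 1) | q ∣ x} := by
      rintro ⟨a, b, c⟩ h
      obtain ⟨⟨ha, hb, hc⟩, -, hdvd, -⟩ := mem_adjugateDvdTriples.1 h
      rw [hi, pow_zero, mul_one] at hdvd
      simp only [mem_product, mem_range, mem_filter]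
      exact ⟨ha, hb, hc, hdvd⟩
    exact card_mul_pow_le_of_subset_product hsub (card_range _) (card_range _)
      (card_filter_dvd_range_pow hq (by omega)) (by omega)
  · have hsub : adjugateDvdTriples q n ⊆
        range (q ^ n 0) ×ˢ {x ∈ range (q ^ n 0) | q ∣ x} ×ˢ range (q ^ n 1) := by
      rintro ⟨a, b, c⟩ h
      obtain ⟨⟨ha, hb, hc⟩, -, -, hdvd⟩ := mem_adjugateDvdTriples.1 h
      obtain rfl : c = 0 := by simpa [hi] using hc
      rw [hi, pow_zero, mul_one, Nat.cast_zero, mul_zero, zero_sub, dvd_neg] at hdvd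
      simp only [mem_product, mem_range, mem_filter]
      exact ⟨ha, ⟨hb, Int.natCast_dvd_natCast.1 hdvd⟩, hc⟩
    exact card_mul_pow_le_of_subset_product hsub (card_range _)
      (card_filter_dvd_range_pow hq (by omega)) (card_range _) (by omega)
  · have hsub : adjugateDvdTriples q n ⊆
        {x ∈ range (q ^ n 0) | q ∣ x} ×ˢ range (q ^ n 0) ×ˢ range (q ^ n 1) := by
      rintro ⟨a, b, c⟩ h
      obtain ⟨⟨ha, hb, hc⟩, hdvd, -, -⟩ := mem_adjugateDvdTriples.1 h
      rw [hi, pow_zero, mul_one] at hdvd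
      simp only [mem_product, mem_range, mem_filter]
      exact ⟨⟨ha, hdvd⟩, hb, hc⟩
    exact card_mul_pow_le_of_subset_product hsub (card_filter_dvd_range_pow hq (by omega))
      (card_range _) (card_range _) (by omega)

theorem card_adjugateDvdTriples_one_le {q : ℕ} (hq : q.Prime) :
    #(adjugateDvdTriples q fun _ => 1) ≤ 2 * q ^ 2 := by
  have hsub : adjugateDvdTriples q (fun _ => 1) ⊆
      ({0} ×ˢ range q ×ˢ range q) ∪ (range q ×ˢ range q ×ˢ {0}) := by
    rintro ⟨a, b, c⟩ h
    simp only [mem_adjugateDvdTriples, pow_one] at h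
    obtain ⟨⟨ha, hb, hc⟩, -, -, hdvd⟩ := h
    have hac : q ∣ a * c := by
      exact_mod_cast (dvd_sub_left (dvd_mul_left _ _)).1 hdvd
    simp only [mem_union, mem_product, mem_singleton, mem_range]
    exact (hq.dvd_mul.1 hac).imp (fun h => ⟨Nat.eq_zero_of_dvd_of_lt h ha, hb, hc⟩)
      fun h => ⟨ha, hb, Nat.eq_zero_of_dvd_of_lt h hc⟩
  refine (card_le_card hsub).trans ((card_union_le _ _).trans_eq ?_)
  simp only [card_product, card_range, card_singleton]
  ring

theorem card_adjugateDvdTriples_mul_le {q : ℕ} (hq : q.Prime) (hn : ∑ i, n i = 3)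
    (hn2 : ∀ i, n i ≤ 2) : #(adjugateDvdTriples q n) * q ^ n 2 ≤ 2 * q ^ (2 + n 0) := by
  by_cases h : ∃ i, n i = 0
  · obtain ⟨i, hi⟩ := h
    exact (card_adjugateDvdTriples_le_of_eq_zero hq.ne_zero hn hn2 hi).trans
      (Nat.le_mul_of_pos_left _ two_pos)
  · obtain rfl : n = fun _ => 1 := by
      push Not at h
      have := h 0; have := h 1; have := h 2
      rw [Fin.sum_univ_three] at hn
      funext i
      fin_cases i <;> grind
    calc _ ≤ 2 * q ^ 2 * q ^ 1 := Nat.mul_le_mul_right _ (card_adjugateDvdTriples_one_le hq)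
      _ = 2 * q ^ (2 + 1) := by ring

end Counting

section IwasawaCell

open Matrix

variable {p} {n : ℕ}

/-- The Iwasawa cell `N p^f K` of `GL_n(ℚ_p)`, for `N` the upper unitriangular group and
`K = GL_n(ℤ_p)`. -/
def iwasawaCell (f : Fin n → ℤ) : Set (GL (Fin n) ℚ_[p]) :=
  {g | ∃ k ∈ integralGL p (Fin n), (g * k).1.IsUpperTriangular ∧
    (g * k).1.diag = fun i => (p : ℚ_[p]) ^ f i}

variable (n) in
/-- The exponents `f` for which the Iwasawa cell `N p^f K` can meet `cartanBox 0 hi d`. -/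
def boxExponents (hi d : ℤ) : Finset (Fin n → ℤ) :=
  {f ∈ Fintype.piFinset fun _ => Finset.Icc 0 hi | ∑ i, f i = d}

theorem exists_mem_iwasawaCell (g : GL (Fin n) ℚ_[p]) : ∃ f, g ∈ iwasawaCell f := by
  obtain ⟨V, hV⟩ := exists_mul_map_isUpperTriangular (R := ℤ_[p]) g.1
  set v := GeneralLinearGroup.map (algebraMap ℤ_[p] ℚ_[p]) V
  have hdiag : ∀ i, (g * v).1 i i ≠ 0 := by
    have h := GeneralLinearGroup.det_ne_zero (g * v)
    rw [Units.val_mul, det_of_isUpperTriangular hV] at h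
    exact fun i => Finset.prod_ne_zero_iff.1 h i (Finset.mem_univ i)
  choose u f huf using fun i => exists_padicInt_unit_mul_zpow (hdiag i)
  obtain ⟨k, hk, hku⟩ := exists_mem_integralGL_val_eq_diagonal fun i => (u i)⁻¹
  refine ⟨f, v * k, mul_mem ⟨V, rfl⟩ hk, ?_, ?_⟩
  · rw [← mul_assoc, Units.val_mul, hku]
    exact hV.mul (blockTriangular_diagonal _)
  · ext i
    rw [diag_apply, ← mul_assoc, Units.val_mul, hku, mul_diagonal, huf i, mul_right_comm,
      ← PadicInt.coe_mul, Units.mul_inv, PadicInt.coe_one, one_mul]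

theorem inv_mul_mem_iwasawaCell {x g : GL (Fin n) ℚ_[p]} {f m : Fin n → ℤ}
    (hx : x.1 = diagonal fun i => (p : ℚ_[p]) ^ m i) (hg : g ∈ iwasawaCell f) :
    x⁻¹ * g ∈ iwasawaCell (f - m) := by
  obtain ⟨k, hk, htri, hdiag⟩ := hg
  refine ⟨k, hk, ?_, ?_⟩
  · rw [mul_assoc, Units.val_mul, inv_val_eq_diagonal_zpow_neg hx]
    exact (blockTriangular_diagonal _).mul htri
  · ext i
    rw [mul_assoc, Units.val_mul, inv_val_eq_diagonal_zpow_neg hx, diag_apply,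
      diagonal_mul, ← diag_apply (g * k).1, hdiag, ← zpow_add₀ (NeZero.ne _), neg_add_eq_sub,
      Pi.sub_apply]

theorem le_and_sum_eq_of_mem_iwasawaCell {lo hi d : ℤ} {g : GL (Fin n) ℚ_[p]} {f : Fin n → ℤ}
    (hg : g ∈ iwasawaCell f) (hbox : g ∈ cartanBox lo hi d) :
    (∀ i, lo ≤ f i ∧ f i ≤ hi) ∧ ∑ i, f i = d := by
  obtain ⟨k, hk, htri, hdiag⟩ := hg
  have hbox' := (mul_mem_cartanBox_iff_of_mem_integralGL hk).2 hbox
  exact ⟨le_and_le_of_mem_cartanBox hbox' htri hdiag, sum_eq_of_mem_cartanBox hbox' htri hdiag⟩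

end IwasawaCell

section CellMeasure

open Matrix

theorem measure_le_of_forall_inv_mul_mem {G : Type*} [Group G] [MeasurableSpace G]
    [MeasurableMul G] (μ : Measure G) [μ.IsMulLeftInvariant] {S T : Set G}
    (h : ∀ x ∈ S, ∀ y ∈ S, x⁻¹ * y ∈ T) : μ S ≤ μ T := by
  obtain rfl | ⟨x, hx⟩ := S.eq_empty_or_nonempty
  · rw [measure_empty]
    exact zero_le
  · rw [← measure_preimage_mul μ x⁻¹ T]
    exact measure_mono fun y hy => h x hx y hy

variable {p}

theorem norm_adjugate_apply_le_of_mem_cartanBox {ι : Type*} [Fintype ι] [DecidableEq ι]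
    {lo hi d : ℤ} {g : GL ι ℚ_[p]} (hg : g ∈ cartanBox lo hi d) (i j : ι) :
    ‖g.1.adjugate i j‖ ≤ (p : ℝ) ^ (hi - d) := by
  have hadj : g.1.adjugate = g.1.det • g⁻¹.1 := by
    rw [(Units.eq_mul_inv_iff_mul_eq g).2 (adjugate_mul g.1), Matrix.smul_mul, Matrix.one_mul]
  rw [hadj, Matrix.smul_apply, smul_eq_mul, norm_mul, hg.2.2, sub_eq_neg_add,
    zpow_add₀ (NeZero.ne _)]
  exact mul_le_mul_of_nonneg_left (hg.2.1 i j) (by positivity)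

instance : BorelSpace (GL (Fin 3) ℚ_[p]) := ⟨rfl⟩

theorem measure_setOf_exists_mul_val_eq_le (μ : Measure (GL (Fin 3) ℚ_[p]))
    [μ.IsMulLeftInvariant] (A : Matrix (Fin 3) (Fin 3) ℚ_[p]) :
    μ {g | ∃ k ∈ integralGL p (Fin 3), (g * k).1 = A} ≤ μ (padicK p) := by
  refine measure_le_of_forall_inv_mul_mem μ ?_
  rintro x ⟨k, hk, hx⟩ y ⟨l, hl, hy⟩
  have hxy : x * k = y * l := Units.ext (hx.trans hy.symm)
  have : x⁻¹ * y = k * l⁻¹ := by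
    rw [eq_mul_inv_iff_mul_eq, mul_assoc, ← hxy, inv_mul_cancel_left]
  rw [this]
  exact mul_mem hk (inv_mem hl)

theorem exists_mul_val_eq_hermiteMatrix {hi d : ℤ} {n : Fin 3 → ℕ} {g : GL (Fin 3) ℚ_[p]}
    (hg : g ∈ iwasawaCell fun i => (n i : ℤ)) (hbox : g ∈ cartanBox 0 hi d) :
    ∃ a b c : ℕ, (a, b, c) ∈ hermiteTriples p n ∧
      ∃ k ∈ integralGL p (Fin 3), (g * k).1 = hermiteMatrix p n (a : ℚ_[p]) b c := by
  obtain ⟨k, hk, htri, hdiag⟩ := hg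
  have hint i j : ‖(g * k).1 i j‖ ≤ 1 := by
    simpa using ((mul_mem_cartanBox_iff_of_mem_integralGL hk).2 hbox).1 i j
  obtain ⟨x, y, z, hxyz⟩ := exists_eq_map_hermiteMatrix hint htri (by simpa using hdiag)
  obtain ⟨a, ha, b, hb, c, hc, l, hl⟩ := exists_hermiteMatrix_mul_eq n x y z
  refine ⟨a, b, c, by simp [hermiteTriples, ha, hb, hc], k * _, mul_mem hk ⟨l, rfl⟩, ?_⟩
  calc (g * (k * GeneralLinearGroup.map (algebraMap ℤ_[p] ℚ_[p]) l)).1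
      = (hermiteMatrix p n x y z * l.1).map (algebraMap ℤ_[p] ℚ_[p]) := by
        rw [← mul_assoc, Units.val_mul, hxyz, Matrix.map_mul]
        rfl
    _ = hermiteMatrix p n (a : ℚ_[p]) b c := by
        rw [hl, map_hermiteMatrix, map_natCast, map_natCast, map_natCast]

variable {μ : Measure (GL (Fin 3) ℚ_[p])} [μ.IsMulLeftInvariant]

theorem measure_iwasawaCell_inter_cartanBox_le_card (hμ : μ (padicK p) = 1) {hi d : ℤ}
    {n : Fin 3 → ℕ} {F : Finset (ℕ × ℕ × ℕ)}
    (hF : ∀ a b c : ℕ, (a, b, c) ∈ hermiteTriples p n → ∀ g ∈ cartanBox (p := p) 0 hi d,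
      g.1 = hermiteMatrix p n (a : ℚ_[p]) b c → (a, b, c) ∈ F) :
    μ (iwasawaCell (fun i => (n i : ℤ)) ∩ cartanBox 0 hi d) ≤ F.card := by
  have hsub : iwasawaCell (fun i => (n i : ℤ)) ∩ cartanBox 0 hi d ⊆ ⋃ t ∈ F,
      {g | ∃ k ∈ integralGL p (Fin 3),
        (g * k).1 = hermiteMatrix p n (t.1 : ℚ_[p]) t.2.1 t.2.2} := by
    rintro g ⟨hg, hbox⟩
    obtain ⟨a, b, c, hmem, k, hk, hgk⟩ := exists_mul_val_eq_hermiteMatrix hg hbox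
    simp only [Set.mem_iUnion]
    exact ⟨(a, b, c), hF a b c hmem _ ((mul_mem_cartanBox_iff_of_mem_integralGL hk).2 hbox) hgk,
      k, hk, hgk⟩
  refine (measure_mono hsub).trans ((measure_biUnion_finset_le _ _).trans ?_)
  refine (Finset.sum_le_card_nsmul _ _ 1 fun t _ => ?_).trans_eq (nsmul_one _)
  exact (measure_setOf_exists_mul_val_eq_le μ _).trans_eq hμ

theorem measure_iwasawaCell_inter_cartanBox_le (hμ : μ (padicK p) = 1) {hi d C : ℕ}
    (F : (Fin 3 → ℕ) → Finset (ℕ × ℕ × ℕ))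
    (hcard : ∀ n : Fin 3 → ℕ, ∑ i, n i = d → (∀ i, n i ≤ hi) →
      (F n).card * p ^ n 2 ≤ C * p ^ (hi + n 0))
    (hF : ∀ (n : Fin 3 → ℕ) (a b c : ℕ), (a, b, c) ∈ hermiteTriples p n →
      ∀ g ∈ cartanBox (p := p) 0 hi d, g.1 = hermiteMatrix p n (a : ℚ_[p]) b c → (a, b, c) ∈ F n)
    (f : Fin 3 → ℤ) :
    μ (iwasawaCell f ∩ cartanBox 0 hi d) ≤ ENNReal.ofReal (C * (p : ℝ) ^ (hi + f 0 - f 2)) := by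
  obtain hempty | ⟨g, hg, hbox⟩ := (iwasawaCell f ∩ cartanBox (p := p) 0 hi d).eq_empty_or_nonempty
  · rw [hempty, measure_empty]
    exact zero_le
  obtain ⟨hf, hsum⟩ := le_and_sum_eq_of_mem_iwasawaCell hg hbox
  obtain ⟨n, rfl⟩ : ∃ n : Fin 3 → ℕ, f = fun i => (n i : ℤ) :=
    ⟨fun i => (f i).toNat, funext fun i => (Int.toNat_of_nonneg (hf i).1).symm⟩
  beta_reduce at hf hsum ⊢
  have hp : (0 : ℝ) < p := by exact_mod_cast (Fact.out : p.Prime).pos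
  have hle := hcard n (by exact_mod_cast hsum) fun i => by exact_mod_cast (hf i).2
  refine (measure_iwasawaCell_inter_cartanBox_le_card hμ (hF n)).trans ?_
  rw [← ENNReal.ofReal_natCast]
  refine ENNReal.ofReal_le_ofReal ?_
  rw [zpow_sub₀ hp.ne', ← mul_div_assoc, le_div_iff₀ (by positivity)]
  exact_mod_cast hle

theorem measure_iwasawaCell_inter_cartanBox_one_one_le (hμ : μ (padicK p) = 1) (f : Fin 3 → ℤ) :
    μ (iwasawaCell f ∩ cartanBox 0 1 1) ≤ ENNReal.ofReal (1 * (p : ℝ) ^ (1 + f 0 - f 2)) := by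
  simpa using measure_iwasawaCell_inter_cartanBox_le hμ (hi := 1) (d := 1) (C := 1)
    (hermiteTriples p) (fun n hn _ => by simpa using card_hermiteTriples_mul_le p hn)
    (fun _ _ _ _ h _ _ _ => h) f

theorem measure_iwasawaCell_inter_cartanBox_two_three_le (hμ : μ (padicK p) = 1)
    (f : Fin 3 → ℤ) :
    μ (iwasawaCell f ∩ cartanBox 0 2 3) ≤ ENNReal.ofReal (2 * (p : ℝ) ^ (2 + f 0 - f 2)) := by
  refine measure_iwasawaCell_inter_cartanBox_le hμ (hi := 2) (d := 3) (C := 2)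
    (adjugateDvdTriples p) (fun n hn hn2 => card_adjugateDvdTriples_mul_le Fact.out hn hn2)
    (fun n a b c hmem g hbox hg => mem_adjugateDvdTriples_of_dvd_adjugate hmem fun i j => ?_) f
  have hadj : g.1.adjugate i j = ((hermiteMatrix p n (a : ℤ) b c).adjugate i j : ℤ) := by
    have hmap : g.1 = (Int.castRingHom ℚ_[p]).mapMatrix (hermiteMatrix p n (a : ℤ) b c) := by
      rw [hg, RingHom.mapMatrix_apply, map_hermiteMatrix]
      simp
    rw [hmap, ← RingHom.map_adjugate]
    rfl
  have hnorm := norm_adjugate_apply_le_of_mem_cartanBox hbox i j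
  rw [hadj] at hnorm
  simpa using (Padic.norm_int_le_pow_iff_dvd _ 1).1 (by simpa using hnorm)

theorem measure_iwasawaCell_inter_cartanBox_le_mul_zpow (hμ : μ (padicK p) = 1) {h : ℤ}
    (hh : h ∈ Finset.Icc 1 2) (f : Fin 3 → ℤ) :
    μ (iwasawaCell f ∩ cartanBox 0 h (2 * h - 1)) ≤
      ENNReal.ofReal (h * (p : ℝ) ^ (h + f 0 - f 2)) := by
  obtain rfl | rfl : h = 1 ∨ h = 2 := by
    rw [Finset.mem_Icc] at hh
    omega
  · simpa using measure_iwasawaCell_inter_cartanBox_one_one_le hμ f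
  · simpa using measure_iwasawaCell_inter_cartanBox_two_three_le hμ f

theorem measure_cartanBox_inter_le {x : GL (Fin 3) ℚ_[p]} {m : Fin 3 → ℤ}
    (hx : x.1 = diagonal fun i => (p : ℚ_[p]) ^ m i) (hi d : ℤ) {hi' d' : ℤ} {C : ℝ} (hC : 0 ≤ C)
    (hcell : ∀ f, μ (iwasawaCell f ∩ cartanBox 0 hi' d') ≤
      ENNReal.ofReal (C * (p : ℝ) ^ (hi' + f 0 - f 2))) :
    μ (cartanBox 0 hi d ∩ {y | x⁻¹ * y ∈ cartanBox 0 hi' d'}) ≤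
      ENNReal.ofReal ((boxExponents 3 hi d).card * (C * (p : ℝ) ^ (hi + hi' + m 2 - m 0))) := by
  have hp : 1 ≤ (p : ℝ) := by exact_mod_cast (Fact.out : p.Prime).one_le
  have hsub : cartanBox 0 hi d ∩ {y | x⁻¹ * y ∈ cartanBox 0 hi' d'} ⊆
      ⋃ e ∈ boxExponents 3 hi d, (x⁻¹ * ·) ⁻¹' (iwasawaCell (e - m) ∩ cartanBox 0 hi' d') := by
    rintro y ⟨hy, hxy⟩
    obtain ⟨e, he⟩ := exists_mem_iwasawaCell y
    simp only [Set.mem_iUnion]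
    refine ⟨e, ?_, inv_mul_mem_iwasawaCell hx he, hxy⟩
    simpa [boxExponents] using le_and_sum_eq_of_mem_iwasawaCell he hy
  have hterm : ∀ e ∈ boxExponents 3 hi d,
      μ ((x⁻¹ * ·) ⁻¹' (iwasawaCell (e - m) ∩ cartanBox 0 hi' d')) ≤
      ENNReal.ofReal (C * (p : ℝ) ^ (hi + hi' + m 2 - m 0)) := fun e he => by
    simp only [boxExponents, Finset.mem_filter, Fintype.mem_piFinset, Finset.mem_Icc] at he
    have h0 := he.1 0
    have h2 := he.1 2
    rw [measure_preimage_mul]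
    refine (hcell _).trans (ENNReal.ofReal_le_ofReal ?_)
    refine mul_le_mul_of_nonneg_left (zpow_le_zpow_right₀ hp ?_) hC
    simp only [Pi.sub_apply]
    omega
  calc _ ≤ ∑ e ∈ boxExponents 3 hi d,
          μ ((x⁻¹ * ·) ⁻¹' (iwasawaCell (e - m) ∩ cartanBox 0 hi' d')) :=
        (measure_mono hsub).trans (measure_biUnion_finset_le _ _)
    _ ≤ (boxExponents 3 hi d).card • ENNReal.ofReal (C * (p : ℝ) ^ (hi + hi' + m 2 - m 0)) :=
        Finset.sum_le_card_nsmul _ _ _ hterm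
    _ = _ := by
        rw [nsmul_eq_mul, ENNReal.ofReal_mul (Nat.cast_nonneg _), ENNReal.ofReal_natCast]

end CellMeasure

section Convolution

variable {p} {a b c a' b' c' : ℤ}

theorem isCompact_padicDoubleCoset (a b c : ℤ) : IsCompact (padicDoubleCoset p a b c) := by
  rw [padicDoubleCoset_eq_doubleCoset]
  exact (isCompact_integralGL.mul isCompact_singleton).mul isCompact_integralGL

theorem measurableSet_padicDoubleCoset (a b c : ℤ) : MeasurableSet (padicDoubleCoset p a b c) :=
  (isCompact_padicDoubleCoset a b c).measurableSet

theorem mul_mul_mem_padicDoubleCoset_iff {k l g : GL (Fin 3) ℚ_[p]} (hk : k ∈ integralGL p (Fin 3))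
    (hl : l ∈ integralGL p (Fin 3)) :
    k * g * l ∈ padicDoubleCoset p a b c ↔ g ∈ padicDoubleCoset p a b c := by
  have hmul {k l g : GL (Fin 3) ℚ_[p]} (hk : k ∈ integralGL p (Fin 3))
      (hl : l ∈ integralGL p (Fin 3)) (hg : g ∈ padicDoubleCoset p a b c) :
      k * g * l ∈ padicDoubleCoset p a b c := by
    obtain ⟨k', hk', l', hl', rfl⟩ := hg
    exact ⟨k * k', mul_mem hk hk', l' * l, mul_mem hl' hl, by group⟩
  refine ⟨fun h => ?_, hmul hk hl⟩
  have h' := hmul (inv_mem hk) (inv_mem hl) h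
  rwa [mul_assoc k, inv_mul_cancel_left, mul_inv_cancel_right] at h'

theorem padicPhi_mul_mul {k l : GL (Fin 3) ℚ_[p]} (hk : k ∈ integralGL p (Fin 3))
    (hl : l ∈ integralGL p (Fin 3)) (g : GL (Fin 3) ℚ_[p]) :
    padicPhi p a b c (k * g * l) = padicPhi p a b c g :=
  Set.indicator_const_eq_indicator_const (mul_mul_mem_padicDoubleCoset_iff hk hl)

theorem padicConv_mul_mul (μ : Measure (GL (Fin 3) ℚ_[p])) [μ.IsMulLeftInvariant]
    {f h : GL (Fin 3) ℚ_[p] → ℝ} {k l : GL (Fin 3) ℚ_[p]} (hf : ∀ y, f (k * y) = f y)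
    (hh : ∀ y, h (y * l) = h y) (x : GL (Fin 3) ℚ_[p]) :
    padicConv p μ f h (k * x * l) = padicConv p μ f h x := by
  have hy (y : GL (Fin 3) ℚ_[p]) : (k * y)⁻¹ * (k * x * l) = y⁻¹ * x * l := by group
  rw [padicConv, ← integral_mul_left_eq_self _ k]
  simp only [hy, hf, hh]
  rfl

theorem padicConv_padicBigPhi_mul_mul (μ : Measure (GL (Fin 3) ℚ_[p])) [μ.IsMulLeftInvariant]
    {k l : GL (Fin 3) ℚ_[p]} (hk : k ∈ integralGL p (Fin 3)) (hl : l ∈ integralGL p (Fin 3))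
    (x : GL (Fin 3) ℚ_[p]) :
    padicConv p μ (padicBigPhi p) (padicBigPhiStar p) (k * x * l) =
      padicConv p μ (padicBigPhi p) (padicBigPhiStar p) x := by
  refine padicConv_mul_mul μ (fun y => ?_) (fun y => ?_) x
  · have hphi (a b c : ℤ) : padicPhi p a b c (k * y) = padicPhi p a b c y := by
      simpa using padicPhi_mul_mul hk (one_mem _) y
    simp only [padicBigPhi, hphi]
  · have hphi (a b c : ℤ) : padicPhi p a b c (y * l) = padicPhi p a b c y := by
      simpa using padicPhi_mul_mul (one_mem _) hl y
    simp only [padicBigPhiStar, hphi]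

theorem padicPhi_mul_padicPhi_eq_indicator (x : GL (Fin 3) ℚ_[p]) :
    (fun y => padicPhi p a b c y * padicPhi p a' b' c' (y⁻¹ * x)) =
      (padicDoubleCoset p a b c ∩ {y | y⁻¹ * x ∈ padicDoubleCoset p a' b' c'}).indicator 1 :=
  (Set.inter_indicator_one (M₀ := ℝ)).symm

theorem measurableSet_padicDoubleCoset_inter (x : GL (Fin 3) ℚ_[p]) : MeasurableSet
    (padicDoubleCoset p a b c ∩ {y | y⁻¹ * x ∈ padicDoubleCoset p a' b' c'}) :=
  (measurableSet_padicDoubleCoset a b c).inter <|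
    (measurableSet_padicDoubleCoset a' b' c').preimage <|
      (continuous_inv.mul continuous_const).measurable

theorem padicConv_padicPhi (μ : Measure (GL (Fin 3) ℚ_[p])) (x : GL (Fin 3) ℚ_[p]) :
    padicConv p μ (padicPhi p a b c) (padicPhi p a' b' c') x =
      μ.real (padicDoubleCoset p a b c ∩ {y | y⁻¹ * x ∈ padicDoubleCoset p a' b' c'}) := by
  rw [padicConv, padicPhi_mul_padicPhi_eq_indicator,
    integral_indicator_one (measurableSet_padicDoubleCoset_inter x)]

variable (μ : Measure (GL (Fin 3) ℚ_[p]))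

theorem integrable_padicPhi_mul_padicPhi [IsFiniteMeasureOnCompacts μ]
    (a b c a' b' c' : ℤ) (x : GL (Fin 3) ℚ_[p]) :
    Integrable (fun y => padicPhi p a b c y * padicPhi p a' b' c' (y⁻¹ * x)) μ := by
  rw [padicPhi_mul_padicPhi_eq_indicator,
    integrable_indicator_iff (measurableSet_padicDoubleCoset_inter x)]
  refine integrableOn_const (measure_ne_top_of_subset Set.inter_subset_left ?_)
  exact (isCompact_padicDoubleCoset a b c).measure_ne_top

theorem padicBigPhi_eq_sum (x : GL (Fin 3) ℚ_[p]) :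
    padicBigPhi p x = ∑ r ∈ Finset.Icc (1 : ℤ) 2, (p : ℝ) ^ (-r) * padicPhi p r (r - 1) 0 x := by
  have hIcc : Finset.Icc (1 : ℤ) 2 = {1, 2} := rfl
  simp [padicBigPhi, hIcc, zpow_neg, zpow_ofNat]

theorem padicBigPhiStar_eq_sum (x : GL (Fin 3) ℚ_[p]) :
    padicBigPhiStar p x =
      ∑ s ∈ Finset.Icc (1 : ℤ) 2, (p : ℝ) ^ (-s) * padicPhi p 0 (1 - s) (-s) x := by
  have hIcc : Finset.Icc (1 : ℤ) 2 = {1, 2} := rfl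
  simp [padicBigPhiStar, hIcc, zpow_neg, zpow_ofNat]

theorem padicConv_padicBigPhi_eq_sum [IsFiniteMeasureOnCompacts μ] (x : GL (Fin 3) ℚ_[p]) :
    padicConv p μ (padicBigPhi p) (padicBigPhiStar p) x =
      ∑ r ∈ Finset.Icc (1 : ℤ) 2, ∑ s ∈ Finset.Icc (1 : ℤ) 2, (p : ℝ) ^ (-r) * (p : ℝ) ^ (-s) *
        padicConv p μ (padicPhi p r (r - 1) 0) (padicPhi p 0 (1 - s) (-s)) x := by
  have hint (r s : ℤ) :=
    (integrable_padicPhi_mul_padicPhi μ r (r - 1) 0 0 (1 - s) (-s) x).const_mul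
      ((p : ℝ) ^ (-r) * (p : ℝ) ^ (-s))
  simp only [padicConv, padicBigPhi_eq_sum, padicBigPhiStar_eq_sum, Finset.sum_mul_sum,
    mul_mul_mul_comm _ (padicPhi p _ _ _ _)]
  rw [integral_finsetSum _ fun r _ => integrable_finsetSum _ fun s _ => hint r s]
  refine Finset.sum_congr rfl fun r _ => ?_
  rw [integral_finsetSum _ fun s _ => hint r s]
  exact Finset.sum_congr rfl fun s _ => integral_const_mul _ _

theorem padicConv_padicBigPhi_nonneg [IsFiniteMeasureOnCompacts μ] (x : GL (Fin 3) ℚ_[p]) :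
    0 ≤ padicConv p μ (padicBigPhi p) (padicBigPhiStar p) x := by
  rw [padicConv_padicBigPhi_eq_sum]
  refine Finset.sum_nonneg fun r _ => Finset.sum_nonneg fun s _ => mul_nonneg (by positivity) ?_
  rw [padicConv_padicPhi]
  exact measureReal_nonneg

theorem mem_cartanBox_of_padicConv_padicPhi_ne_zero {x : GL (Fin 3) ℚ_[p]} (hcb : c ≤ b)
    (hba : b ≤ a) (hcb' : c' ≤ b') (hba' : b' ≤ a')
    (hx : padicConv p μ (padicPhi p a b c) (padicPhi p a' b' c') x ≠ 0) :
    x ∈ cartanBox (c + c') (a + a') (a + b + c + (a' + b' + c')) := by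
  rw [padicConv_padicPhi] at hx
  obtain ⟨y, hy, hyx⟩ := nonempty_of_measureReal_ne_zero hx
  simpa using mul_mem_cartanBox (padicDoubleCoset_subset_cartanBox hcb hba hy)
    (padicDoubleCoset_subset_cartanBox hcb' hba' hyx)

theorem exists_bounds_of_padicConv_padicBigPhi_ne_zero [IsFiniteMeasureOnCompacts μ]
    (h : padicConv p μ (padicBigPhi p) (padicBigPhiStar p) (padicDiag p a b c) ≠ 0) :
    ∃ r ∈ Finset.Icc (1 : ℤ) 2, ∃ s ∈ Finset.Icc (1 : ℤ) 2,
      -s ≤ c ∧ a ≤ r ∧ a + b + c = 2 * (r - s) := by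
  rw [padicConv_padicBigPhi_eq_sum] at h
  obtain ⟨r, hr, h⟩ := Finset.exists_ne_zero_of_sum_ne_zero h
  obtain ⟨s, hs, h⟩ := Finset.exists_ne_zero_of_sum_ne_zero h
  refine ⟨r, hr, s, hs, ?_⟩
  rw [Finset.mem_Icc] at hr hs
  have := padicDiag_le_and_le_of_mem_cartanBox <| mem_cartanBox_of_padicConv_padicPhi_ne_zero μ
    (by omega) (by omega) (by omega) (by omega) (right_ne_zero_of_mul h)
  omega

end Convolution

section UpperBound

variable {p} {μ : Measure (GL (Fin 3) ℚ_[p])} [μ.IsMulLeftInvariant]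

theorem padicConv_padicPhi_padicDiag_le (hμ : μ (padicK p) = 1) {r s : ℤ} (hr : 1 ≤ r)
    (hs : s ∈ Finset.Icc 1 2) (a b c : ℤ) :
    padicConv p μ (padicPhi p r (r - 1) 0) (padicPhi p 0 (1 - s) (-s)) (padicDiag p a b c) ≤
      (boxExponents 3 r (2 * r - 1)).card * (s * (p : ℝ) ^ (r + s + c - a)) := by
  rw [padicConv_padicPhi]
  have hs' := Finset.mem_Icc.1 hs
  have hs0 : (0 : ℝ) ≤ s := by exact_mod_cast (by omega : 0 ≤ s)
  have hsub : padicDoubleCoset p r (r - 1) 0 ∩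
        {y | y⁻¹ * padicDiag p a b c ∈ padicDoubleCoset p 0 (1 - s) (-s)} ⊆
      cartanBox 0 r (2 * r - 1) ∩ {y | (padicDiag p a b c)⁻¹ * y ∈ cartanBox 0 s (2 * s - 1)} := by
    rintro y ⟨hy, hyx⟩
    have hy' := padicDoubleCoset_subset_cartanBox (by omega) (by omega) hy
    have hyx' := inv_mem_cartanBox (padicDoubleCoset_subset_cartanBox (by omega) (by omega) hyx)
    rw [show r + (r - 1) + 0 = 2 * r - 1 by ring] at hy'
    rw [mul_inv_rev, inv_inv, neg_zero, neg_neg,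
      show -(0 + (1 - s) + -s) = 2 * s - 1 by ring] at hyx'
    exact ⟨hy', hyx'⟩
  refine ENNReal.toReal_le_of_le_ofReal (by positivity) ((measure_mono hsub).trans ?_)
  exact measure_cartanBox_inter_le (padicDiag_val a b c) r (2 * r - 1) hs0
    (measure_iwasawaCell_inter_cartanBox_le_mul_zpow hμ hs)

theorem padicConv_padicBigPhi_padicDiag_le [IsFiniteMeasureOnCompacts μ] (hμ : μ (padicK p) = 1)
    (a b c : ℤ) :
    padicConv p μ (padicBigPhi p) (padicBigPhiStar p) (padicDiag p a b c) ≤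
      30 * (p : ℝ) ^ (c - a) := by
  have hp : (p : ℝ) ≠ 0 := NeZero.ne _
  have hterm (r : ℤ) (hr : r ∈ Finset.Icc 1 2) (s : ℤ) (hs : s ∈ Finset.Icc 1 2) :
      (p : ℝ) ^ (-r) * (p : ℝ) ^ (-s) *
        padicConv p μ (padicPhi p r (r - 1) 0) (padicPhi p 0 (1 - s) (-s)) (padicDiag p a b c) ≤
      (boxExponents 3 r (2 * r - 1)).card * s * (p : ℝ) ^ (c - a) := by
    calc _ ≤ (p : ℝ) ^ (-r) * (p : ℝ) ^ (-s) *
          ((boxExponents 3 r (2 * r - 1)).card * (s * (p : ℝ) ^ (r + s + c - a))) :=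
        mul_le_mul_of_nonneg_left
          (padicConv_padicPhi_padicDiag_le hμ (Finset.mem_Icc.1 hr).1 hs a b c) (by positivity)
      _ = (boxExponents 3 r (2 * r - 1)).card * s *
          ((p : ℝ) ^ (-r) * (p : ℝ) ^ (-s) * (p : ℝ) ^ (r + s + c - a)) := by ring
      _ = _ := by
        rw [← zpow_add₀ hp, ← zpow_add₀ hp]
        congr 2
        ring
  have hcount : ∑ r ∈ Finset.Icc (1 : ℤ) 2, ∑ s ∈ Finset.Icc (1 : ℤ) 2,
      (boxExponents 3 r (2 * r - 1)).card * s = 30 := by decide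
  rw [padicConv_padicBigPhi_eq_sum]
  refine (Finset.sum_le_sum fun r hr => Finset.sum_le_sum (hterm r hr)).trans_eq ?_
  simp only [← Finset.sum_mul]
  exact_mod_cast congrArg (fun N : ℤ => (N : ℝ) * (p : ℝ) ^ (c - a)) hcount

end UpperBound

section HeckeExpansion

/-- The dominant weights of `GL₃`, indexing the double cosets `K_p(a,b,c)` without repetition. -/
def dominantTriples : Set (ℤ × ℤ × ℤ) :=
  {t | t.2.2 ≤ t.2.1 ∧ t.2.1 ≤ t.1}

/-- The coefficient of `Φ_p(a,b,c)` in the expansion of a `K_p`-bi-invariant function `F` on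
`GL₃(ℚ_p)`, extended by zero to non-dominant triples. -/
def heckeCoeff (F : GL (Fin 3) ℚ_[p] → ℝ) : ℤ × ℤ × ℤ → ℝ :=
  dominantTriples.indicator fun t => F (padicDiag p t.1 t.2.1 t.2.2)

variable {p} {β : ℤ × ℤ × ℤ →₀ ℝ} {μ : Measure (GL (Fin 3) ℚ_[p])}

theorem sum_mul_padicPhi_eq (hβ : ∀ t ∈ β.support, t ∈ dominantTriples) {t : ℤ × ℤ × ℤ}
    (ht : t ∈ dominantTriples) {x : GL (Fin 3) ℚ_[p]}
    (hx : x ∈ padicDoubleCoset p t.1 t.2.1 t.2.2) :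
    (β.sum fun u r => r * padicPhi p u.1 u.2.1 u.2.2 x) = β t := by
  rw [Finsupp.sum, Finset.sum_eq_single t]
  · rw [padicPhi, Set.indicator_of_mem hx, mul_one]
  · intro u hu hne
    have hxu : x ∉ padicDoubleCoset p u.1 u.2.1 u.2.2 := fun hxu =>
      hne (eq_of_mem_padicDoubleCoset (hβ u hu).1 (hβ u hu).2 ht.1 ht.2 hxu hx)
    rw [padicPhi, Set.indicator_of_notMem hxu, mul_zero]
  · intro ht'
    rw [Finsupp.notMem_support_iff.1 ht', zero_mul]

theorem isHeckeExpansion_iff [μ.IsMulLeftInvariant] :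
    IsHeckeExpansion p μ β ↔
      ⇑β = heckeCoeff p (padicConv p μ (padicBigPhi p) (padicBigPhiStar p)) := by
  set F := padicConv p μ (padicBigPhi p) (padicBigPhiStar p) with hF
  constructor
  · rintro ⟨hβ, hsum⟩
    funext t
    by_cases ht : t ∈ dominantTriples
    · rw [heckeCoeff, Set.indicator_of_mem ht, hF, hsum,
        sum_mul_padicPhi_eq hβ ht (padicDiag_mem_padicDoubleCoset _ _ _)]
    · rw [heckeCoeff, Set.indicator_of_notMem ht]
      exact Finsupp.notMem_support_iff.1 fun h => ht (hβ t h)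
  · intro hβ
    have hsupp : ∀ t ∈ β.support, t ∈ dominantTriples := fun t ht =>
      Set.mem_of_indicator_ne_zero (congrFun hβ t ▸ Finsupp.mem_support_iff.1 ht)
    refine ⟨hsupp, fun x => ?_⟩
    obtain ⟨a, b, c, hcb, hba, hx⟩ := exists_mem_padicDoubleCoset x
    have ht : (a, b, c) ∈ dominantTriples := ⟨hcb, hba⟩
    rw [sum_mul_padicPhi_eq hsupp ht hx, hβ, heckeCoeff, Set.indicator_of_mem ht]
    obtain ⟨k, hk, l, hl, rfl⟩ := hx
    exact padicConv_padicBigPhi_mul_mul μ hk hl _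

variable [IsFiniteMeasureOnCompacts μ]

theorem weight_bounds_of_heckeCoeff_ne_zero {a b c : ℤ}
    (h : heckeCoeff p (padicConv p μ (padicBigPhi p) (padicBigPhiStar p)) (a, b, c) ≠ 0) :
    (a + b + c = 2 ∧ -1 ≤ c ∧ c ≤ b ∧ b ≤ a ∧ a ≤ 2) ∨
    (a + b + c = 0 ∧ -2 ≤ c ∧ c ≤ b ∧ b ≤ a ∧ a ≤ 2) ∨
    (a + b + c = -2 ∧ -2 ≤ c ∧ c ≤ b ∧ b ≤ a ∧ a ≤ 1) := by
  obtain ⟨⟨hcb : c ≤ b, hba : b ≤ a⟩, hne⟩ := Set.indicator_apply_ne_zero.1 h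
  obtain ⟨r, hr, s, hs, hbounds⟩ :=
    exists_bounds_of_padicConv_padicBigPhi_ne_zero (a := a) (b := b) (c := c) μ hne
  rw [Finset.mem_Icc] at hr hs
  omega

variable (p μ) in
/-- The coefficient function of `Φ * Φ^*` as a finitely supported function. -/
def heckeFinsupp : ℤ × ℤ × ℤ →₀ ℝ :=
  Finsupp.onFinset (Finset.Icc (-2) 2 ×ˢ Finset.Icc (-2) 2 ×ˢ Finset.Icc (-2) 2)
    (heckeCoeff p (padicConv p μ (padicBigPhi p) (padicBigPhiStar p))) fun ⟨a, b, c⟩ ht => by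
      have := weight_bounds_of_heckeCoeff_ne_zero ht
      simp only [Finset.mem_product, Finset.mem_Icc]
      omega

theorem heckeCoeff_nonneg (t : ℤ × ℤ × ℤ) :
    0 ≤ heckeCoeff p (padicConv p μ (padicBigPhi p) (padicBigPhiStar p)) t :=
  Set.indicator_nonneg (fun _ _ => padicConv_padicBigPhi_nonneg μ _) t

theorem heckeCoeff_le [μ.IsMulLeftInvariant] (hμ : μ (padicK p) = 1) (a b c : ℤ) :
    heckeCoeff p (padicConv p μ (padicBigPhi p) (padicBigPhiStar p)) (a, b, c) ≤
      30 * (p : ℝ) ^ (c - a) :=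
  Set.indicator_apply_le' (fun _ => padicConv_padicBigPhi_padicDiag_le hμ a b c)
    fun _ => by positivity

end HeckeExpansion

/-- `Φ * Φ^*` has a unique expansion `Σ_{a ≥ b ≥ c} β(a,b,c) Φ_p(a,b,c)`,
with `β(a,b,c) ≥ 0`, support satisfying one of the three pairs of inequalities, and
`β(a,b,c) ≤ 121·p^{c−a}`. -/
theorem statement3 (μ : Measure (GL (Fin 3) ℚ_[p])) [μ.IsHaarMeasure]
    (hμ : μ (padicK p) = 1) :
    ∃ β : ℤ × ℤ × ℤ →₀ ℝ,
      IsHeckeExpansion p μ β ∧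
      (∀ β' : ℤ × ℤ × ℤ →₀ ℝ, IsHeckeExpansion p μ β' → β' = β) ∧
      (∀ t, 0 ≤ β t) ∧
      (∀ a b c : ℤ, β (a, b, c) ≠ 0 →
        (a + b + c = 2 ∧ -1 ≤ c ∧ c ≤ b ∧ b ≤ a ∧ a ≤ 2) ∨
        (a + b + c = 0 ∧ -2 ≤ c ∧ c ≤ b ∧ b ≤ a ∧ a ≤ 2) ∨
        (a + b + c = -2 ∧ -2 ≤ c ∧ c ≤ b ∧ b ≤ a ∧ a ≤ 1)) ∧
      (∀ a b c : ℤ, β (a, b, c) ≤ 121 * (p : ℝ) ^ (c - a)) := by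
  refine ⟨heckeFinsupp p μ, isHeckeExpansion_iff.2 rfl,
    fun β' hβ' => DFunLike.coe_injective (isHeckeExpansion_iff.1 hβ'),
    heckeCoeff_nonneg, fun a b c => weight_bounds_of_heckeCoeff_ne_zero,
    fun a b c => (heckeCoeff_le hμ a b c).trans ?_⟩
  gcongr
  norm_num

end
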